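/- arXiv:1709.02283 — 9 statements merged into one kernel-verified Lean document; each statement's English description precedes it below -/
import Mathlib

section
/- Let x be a real number and let (q_n) be any sequence of positive real numbers. Then the inequality q_n * p_{n+1}^x - q_{n+1} * p_n^x < p_n^x * p_{n+1}^(x-1) holds for infinitely many values of n, where p_n denotes the n-th prime number. -/
/-- `nthPrime n` is the `n`-th prime number with 1-based indexing:
`nthPrime 1 = 2`, `nthPrime 2 = 3`, `nthPrime 3 = 5`, ... -/
noncomputable def nthPrime (n : ℕ) : ℕ := Nat.nth Nat.Prime (n - 1)

theorem not_summable_one_div_nth :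
    ¬ Summable (fun n : ℕ => (1 : ℝ) / (Nat.nth Nat.Prime n : ℝ)) := by
  intro h
  apply not_summable_one_div_on_primes
  have hinj : Function.Injective (Nat.nth Nat.Prime) :=
    Nat.nth_injective Nat.infinite_setOf_prime
  rw [← hinj.summable_iff]
  · refine h.congr fun n => ?_
    have hp : Nat.Prime (Nat.nth Nat.Prime n) := Nat.prime_nth_prime n
    simp [Set.indicator, hp]
  · intro m hm
    rw [Nat.range_nth_of_infinite Nat.infinite_setOf_prime] at hm
    exact Set.indicator_of_notMem hm _

/-- For any real `x` and any sequence `q` of positive reals, the inequality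
`q n * p (n+1) ^ x - q (n+1) * p n ^ x < p n ^ x * p (n+1) ^ (x - 1)`
holds for infinitely many positive integers `n`. -/
theorem gaps_of_powers_main (x : ℝ) (q : ℕ → ℝ) (hq : ∀ n, 0 < q n) :
    ∃ᶠ n in Filter.atTop, 1 ≤ n ∧
      q n * (nthPrime (n + 1) : ℝ) ^ x - q (n + 1) * (nthPrime n : ℝ) ^ x
        < (nthPrime n : ℝ) ^ x * (nthPrime (n + 1) : ℝ) ^ (x - 1) := by
  intro hev
  obtain ⟨N, hN⟩ := Filter.eventually_atTop.1 hev
  have hpos : ∀ n, (0 : ℝ) < (nthPrime n : ℝ) := fun n => by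
    exact_mod_cast (Nat.prime_nth_prime (n - 1)).pos
  set M := N + 1 with hM
  have key : ∀ n, M ≤ n → (1 : ℝ) / (nthPrime (n + 1) : ℝ) ≤
      q n / (nthPrime n : ℝ) ^ x - q (n + 1) / (nthPrime (n + 1) : ℝ) ^ x := by
    intro n hn
    have h1 := hN n (by omega)
    have h2 : (nthPrime n : ℝ) ^ x * (nthPrime (n + 1) : ℝ) ^ (x - 1) ≤
        q n * (nthPrime (n + 1) : ℝ) ^ x - q (n + 1) * (nthPrime n : ℝ) ^ x := by
      by_contra hc
      exact h1 ⟨by omega, not_le.1 hc⟩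
    have ha := Real.rpow_pos_of_pos (hpos n) x
    have hb := Real.rpow_pos_of_pos (hpos (n + 1)) x
    have hp := hpos (n + 1)
    rw [Real.rpow_sub_one hp.ne'] at h2
    rw [div_sub_div _ _ ha.ne' hb.ne', le_div_iff₀ (mul_pos ha hb)]
    calc _ = (nthPrime n : ℝ) ^ x * ((nthPrime (n + 1) : ℝ) ^ x / (nthPrime (n + 1) : ℝ)) := by
          ring
      _ ≤ _ := h2
      _ = _ := by ring
  apply not_summable_one_div_nth
  rw [← summable_nat_add_iff M]
  have hsum : ∀ m, ∑ k ∈ Finset.range m, (1 : ℝ) / (Nat.nth Nat.Prime (k + M) : ℝ) ≤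
      q M / (nthPrime M : ℝ) ^ x - q (M + m) / (nthPrime (M + m) : ℝ) ^ x := by
    intro m
    induction m with
    | zero => simp
    | succ m ih =>
      rw [Finset.sum_range_succ]
      have h3 := key (M + m) (by omega)
      have h4 : nthPrime (M + m + 1) = Nat.nth Nat.Prime (m + M) := by
        unfold nthPrime
        congr 1
        omega
      rw [← h4, ← add_assoc M m 1]
      linarith
  refine summable_of_sum_range_le (c := q M / (nthPrime M : ℝ) ^ x)
    (fun n => by positivity) fun m => (hsum m).trans ?_
  have := div_pos (hq (M + m)) (Real.rpow_pos_of_pos (hpos (M + m)) x)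
  linarith
end

section
/- Let (a_n) and (b_n) be sequences of positive real numbers. If there exist a sequence (q_n) of positive real numbers and a positive integer N such that q_n * (a_n / a_{n+1}) - q_{n+1} ≥ b_{n+1} for all n > N, then the series ∑ a_n * b_n converges. -/
/-- Extension of Kummer's test (sufficiency): if there are a positive sequence `q` and a
positive integer `N` with `q n * (a n / a (n+1)) - q (n+1) ≥ b (n+1)` for all `n > N`,
then `∑ a n * b n` converges. -/
theorem kummer_extension_sufficient (a b : ℕ → ℝ)
    (ha : ∀ n, 0 < a n) (hb : ∀ n, 0 < b n)
    (h : ∃ (q : ℕ → ℝ) (N : ℕ), 0 < N ∧ (∀ n, 0 < q n) ∧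
      ∀ n, N < n → q n * (a n / a (n + 1)) - q (n + 1) ≥ b (n + 1)) :
    Summable (fun n => a n * b n) := by
  obtain ⟨q, N, -, hq, h⟩ := h
  have key : ∀ n, N < n → a (n + 1) * b (n + 1) ≤ q n * a n - q (n + 1) * a (n + 1) := by
    intro n hn
    have h1 := mul_le_mul_of_nonneg_left (h n hn) (ha (n + 1)).le
    have hne : a (n + 1) ≠ 0 := (ha (n + 1)).ne'
    have h2 : a (n + 1) * (q n * (a n / a (n + 1)) - q (n + 1))
        = q n * a n - q (n + 1) * a (n + 1) := by
      field_simp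
    linarith
  rw [← summable_nat_add_iff (N + 2)]
  have bound : ∀ k, ∑ i ∈ Finset.range k, a (i + (N + 2)) * b (i + (N + 2))
      ≤ q (N + 1) * a (N + 1) - q (k + (N + 1)) * a (k + (N + 1)) := by
    intro k
    induction k with
    | zero => simp
    | succ k ih =>
      rw [Finset.sum_range_succ]
      have h1 := key (k + (N + 1)) (by omega)
      have e1 : k + (N + 1) + 1 = k + (N + 2) := by omega
      have e2 : k + 1 + (N + 1) = k + (N + 2) := by omega
      rw [e1] at h1
      rw [e2]
      linarith
  refine summable_of_sum_range_le (c := q (N + 1) * a (N + 1))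
    (fun n => (mul_pos (ha _) (hb _)).le) (fun k => ?_)
  have h1 := bound k
  have h2 := mul_pos (hq (k + (N + 1))) (ha (k + (N + 1)))
  linarith
end

section
/- Let (a_n) and (b_n) be sequences of positive real numbers. If the series ∑ a_n * b_n converges, then there exists a sequence (q_n) of positive real numbers such that q_n * (a_n / a_{n+1}) - q_{n+1} = b_{n+1} for all n ≥ 1. -/
/-- Extension of Kummer's test (necessity): if `∑ a n * b n` converges, then there is a
positive sequence `q` with `q n * (a n / a (n+1)) - q (n+1) = b (n+1)` for all `n ≥ 1`. -/
theorem kummer_extension_necessary (a b : ℕ → ℝ)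
    (ha : ∀ n, 0 < a n) (hb : ∀ n, 0 < b n)
    (h : Summable (fun n => a n * b n)) :
    ∃ q : ℕ → ℝ, (∀ n, 0 < q n) ∧
      ∀ n, 1 ≤ n → q n * (a n / a (n + 1)) - q (n + 1) = b (n + 1) := by
  have hpos : ∀ n, 0 < a n * b n := fun n => mul_pos (ha n) (hb n)
  refine ⟨fun n => ((∑' i, a i * b i) - ∑ i ∈ Finset.range (n + 1), a i * b i) / a n, ?_, ?_⟩
  · intro n
    have h1 := h.sum_le_tsum (Finset.range (n + 2)) (fun i _ => (hpos i).le)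
    rw [Finset.sum_range_succ] at h1
    have h2 := hpos (n + 1)
    exact div_pos (by linarith) (ha n)
  · intro n _
    have h1 := (ha n).ne'
    have h2 := (ha (n + 1)).ne'
    simp only [Finset.sum_range_succ _ (n + 1)]
    field_simp
    ring
end

section
/- Let (a_n) and (b_n) be sequences of positive real numbers. The series ∑ a_n * b_n diverges if and only if for every sequence (q_n) of positive real numbers the following holds: for every positive integer N there exists n > N such that q_n * (a_n / a_{n+1}) - q_{n+1} < b_{n+1}. -/
/-- Contrapositive form of the extended Kummer's test: `∑ a n * b n` diverges iff for every
positive sequence `q` and every positive integer `N` there is some `n > N` with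
`q n * (a n / a (n+1)) - q (n+1) < b (n+1)`. -/
theorem kummer_extension_contrapositive (a b : ℕ → ℝ)
    (ha : ∀ n, 0 < a n) (hb : ∀ n, 0 < b n) :
    ¬ Summable (fun n => a n * b n) ↔
      ∀ q : ℕ → ℝ, (∀ n, 0 < q n) →
        ∀ N : ℕ, 0 < N → ∃ n, N < n ∧ q n * (a n / a (n + 1)) - q (n + 1) < b (n + 1) := by
  constructor
  · intro hns q hq N _
    by_contra hcon
    push Not at hcon
    apply hns
    rw [← summable_nat_add_iff (N + 2)]
    have key : ∀ k : ℕ, ∑ i ∈ Finset.range k, a (i + (N + 2)) * b (i + (N + 2)) ≤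
        q (N + 1) * a (N + 1) - q (k + (N + 1)) * a (k + (N + 1)) := by
      intro k
      induction k with
      | zero => simp
      | succ k ih =>
        rw [Finset.sum_range_succ]
        have h := hcon (k + (N + 1)) (by omega)
        have h2 := mul_le_mul_of_nonneg_left h (ha (k + (N + 1) + 1)).le
        have hne := (ha (k + (N + 1) + 1)).ne'
        have e : a (k + (N + 1) + 1) * (q (k + (N + 1)) * (a (k + (N + 1)) / a (k + (N + 1) + 1))
            - q (k + (N + 1) + 1)) = q (k + (N + 1)) * a (k + (N + 1))
            - q (k + (N + 1) + 1) * a (k + (N + 1) + 1) := by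
          field_simp
        rw [e] at h2
        rw [show k + 1 + (N + 1) = k + (N + 1) + 1 by ring,
          show k + (N + 2) = k + (N + 1) + 1 by ring]
        linarith
    refine summable_of_sum_range_le (c := q (N + 1) * a (N + 1))
      (fun n => (mul_pos (ha _) (hb _)).le) (fun k => ?_)
    have := key k
    have := mul_pos (hq (k + (N + 1))) (ha (k + (N + 1)))
    linarith
  · intro h hs
    obtain ⟨n, _, hn⟩ := h
      (fun n => ((∑' i, a i * b i) - ∑ i ∈ Finset.range (n + 1), a i * b i) / a n)
      (fun n => by
        apply div_pos _ (ha n)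
        have h1 := hs.sum_le_tsum (Finset.range (n + 2))
          (fun i _ => (mul_pos (ha i) (hb i)).le)
        rw [Finset.sum_range_succ] at h1
        have := mul_pos (ha (n + 1)) (hb (n + 1))
        linarith) 1 one_pos
    have h1 := (ha n).ne'
    have h2 := (ha (n + 1)).ne'
    rw [Finset.sum_range_succ _ (n + 1)] at hn
    apply absurd hn
    apply not_lt.mpr
    apply le_of_eq
    field_simp
    ring
end

section
/- Let (q_n) be any sequence of positive real numbers. Then the inequality p_{n+1} - p_n < p_n * (q_{n+1} - q_n + 1) / q_n holds for infinitely many values of n, where p_n denotes the n-th prime number. -/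
/-- For any positive sequence `q`, the inequality
`p (n+1) - p n < p n * (q (n+1) - q n + 1) / q n` holds for infinitely many positive
integers `n`. -/
theorem prime_gap_general_bound (q : ℕ → ℝ) (hq : ∀ n, 0 < q n) :
    ∃ᶠ n in Filter.atTop, 1 ≤ n ∧
      (nthPrime (n + 1) : ℝ) - (nthPrime n : ℝ)
        < (nthPrime n : ℝ) * (q (n + 1) - q n + 1) / q n := by
  intro hev
  obtain ⟨N, hN⟩ := Filter.eventually_atTop.1 hev
  have hpp : ∀ n, 0 < (nthPrime n : ℝ) := fun n => by
    exact_mod_cast (Nat.prime_nth_prime (n - 1)).pos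
  have step : ∀ n, N + 1 ≤ n →
      q (n + 1) / nthPrime (n + 1) + 1 / (nthPrime (n + 1) : ℝ) ≤ q n / nthPrime n := by
    intro n hn
    have h1 := hN n (by omega)
    have h2 : (nthPrime n : ℝ) * (q (n + 1) - q n + 1) / q n
        ≤ (nthPrime (n + 1) : ℝ) - (nthPrime n : ℝ) := by
      by_contra hc
      exact h1 ⟨by omega, not_le.1 hc⟩
    rw [div_le_iff₀ (hq n)] at h2
    rw [← add_div, div_le_div_iff₀ (hpp _) (hpp _)]
    nlinarith
  have bound : ∀ k, ∑ i ∈ Finset.range k, 1 / (Nat.nth Nat.Prime (i + (N + 1)) : ℝ)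
      + q (N + 1 + k) / nthPrime (N + 1 + k) ≤ q (N + 1) / nthPrime (N + 1) := by
    intro k
    induction k with
    | zero => simp
    | succ k ih =>
      have h := step (N + 1 + k) (by omega)
      have e : nthPrime (N + 1 + k + 1) = Nat.nth Nat.Prime (k + (N + 1)) := by
        unfold nthPrime
        congr 1
        omega
      rw [Finset.sum_range_succ, ← e, ← add_assoc (N + 1) k 1]
      linarith
  have hs : Summable (fun i : ℕ => 1 / (Nat.nth Nat.Prime (i + (N + 1)) : ℝ)) := by
    refine summable_of_sum_range_le (c := q (N + 1) / nthPrime (N + 1))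
      (fun _ => by positivity) (fun k => ?_)
    have := bound k
    have := div_pos (hq (N + 1 + k)) (hpp (N + 1 + k))
    linarith
  have hs2 : Summable (fun i : ℕ => 1 / (Nat.nth Nat.Prime i : ℝ)) :=
    (summable_nat_add_iff (f := fun i : ℕ => 1 / (Nat.nth Nat.Prime i : ℝ)) (N + 1)).1 hs
  apply not_summable_one_div_on_primes
  rw [← (Nat.nth_injective Nat.infinite_setOf_prime).summable_iff]
  · convert hs2 using 2 with i
    simp [Set.indicator, Nat.prime_nth_prime]
  · intro x hx
    rw [Nat.range_nth_of_infinite Nat.infinite_setOf_prime] at hx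
    exact Set.indicator_of_notMem hx _
end

section
/- The inequality p_{n+1} - p_n < 2 * p_n / n holds for infinitely many positive integers n, where p_n denotes the n-th prime number. -/
/-- The inequality `p (n+1) - p n < 2 * p n / n` holds for infinitely many positive
integers `n`. -/
theorem prime_gap_two_over_n :
    ∃ᶠ n in Filter.atTop, 1 ≤ n ∧
      (nthPrime (n + 1) : ℝ) - (nthPrime n : ℝ) < 2 * (nthPrime n : ℝ) / (n : ℝ) := by
  intro h
  obtain ⟨N, hN⟩ := Filter.eventually_atTop.1 h
  -- `p m` is the prime of 1-based index `m + 1`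
  set p : ℕ → ℝ := fun m => (Nat.nth Nat.Prime m : ℝ) with hp
  have hpos : ∀ m, 0 < p m := fun m => by
    have := (Nat.prime_nth_prime m).pos
    simp only [hp]
    exact_mod_cast this
  have hstep : ∀ m, N ≤ m → p m * ((m : ℝ) + 3) ≤ p (m + 1) * ((m : ℝ) + 1) := by
    intro m hm
    have h1 := hN (m + 1) (by omega)
    have h2 : 2 * p m / ((m : ℝ) + 1) ≤ p (m + 1) - p m := by
      by_contra hc
      apply h1
      refine ⟨by omega, ?_⟩
      simp only [nthPrime, Nat.add_sub_cancel]
      push_cast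
      exact not_le.1 hc
    rw [div_le_iff₀ (by positivity)] at h2
    linarith
  set c : ℝ := p N / (((N : ℝ) + 1) * (N + 2)) with hc
  have hcpos : 0 < c := div_pos (hpos N) (by positivity)
  have hlow : ∀ m, N ≤ m → c * (((m : ℝ) + 1) * (m + 2)) ≤ p m := by
    intro m hm
    induction m, hm using Nat.le_induction with
    | base => rw [hc, div_mul_cancel₀ _ (by positivity)]
    | succ m hm ih =>
      have h3 := hstep m hm
      have h4 : c * (((m : ℝ) + 1) * (m + 2)) * (m + 3) ≤ p (m + 1) * ((m : ℝ) + 1) :=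
        le_trans (mul_le_mul_of_nonneg_right ih (by positivity)) h3
      have h5 : (0 : ℝ) < (m : ℝ) + 1 := by positivity
      push_cast
      refine le_of_mul_le_mul_right ?_ h5
      linarith
  have hsum : Summable (fun m => 1 / p m) := by
    rw [← summable_nat_add_iff (N + 1)]
    have hs : Summable (fun m : ℕ => c⁻¹ * (1 / ((m + (N + 1) : ℕ) : ℝ) ^ 2)) :=
      ((summable_nat_add_iff (N + 1)).2
        (Real.summable_one_div_nat_pow.2 one_lt_two)).mul_left _
    refine Summable.of_nonneg_of_le (fun m => (one_div_pos.2 (hpos _)).le) (fun m => ?_) hs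
    have h6 := hlow (m + (N + 1)) (by omega)
    set k : ℕ := m + (N + 1) with hk
    have hk0 : (0 : ℝ) < k := by
      have : 0 < k := by omega
      exact_mod_cast this
    rw [← one_div, one_div_mul_one_div]
    apply one_div_le_one_div_of_le (by positivity)
    refine le_trans ?_ h6
    apply mul_le_mul_of_nonneg_left _ hcpos.le
    nlinarith
  apply not_summable_one_div_on_primes
  rw [← (Nat.nth_injective Nat.infinite_setOfPred_prime).summable_iff]
  · refine hsum.congr (fun m => ?_)
    have := Nat.prime_nth_prime m
    simp [hp, Set.indicator, this]
  · intro x hx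
    rw [Nat.range_nth_of_infinite Nat.infinite_setOfPred_prime] at hx
    exact Set.indicator_of_notMem hx _
end

section
/- For every real number x > 0, the limit inferior as n → ∞ of (p_{n+1} - p_n) / p_n^x equals 0, where p_n denotes the n-th prime number. -/
theorem not_summable_nth_prime : ¬ Summable (fun n => 1 / (Nat.nth Nat.Prime n : ℝ)) := by
  intro h
  apply not_summable_one_div_on_primes
  have hinj : Function.Injective (Nat.nth Nat.Prime) :=
    Nat.nth_injective Nat.infinite_setOfPred_prime
  refine (hinj.summable_iff ?_).mp ?_
  · intro p hp
    apply Set.indicator_of_notMem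
    intro hpp
    exact hp ⟨Nat.count Nat.Prime p, Nat.nth_count hpp⟩
  · convert h using 2 with n
    have : Nat.nth Nat.Prime n ∈ {p : ℕ | p.Prime} := Nat.prime_nth_prime n
    simp only [Function.comp]
    exact Set.indicator_of_mem this _

theorem nth_prime_succ_le (n : ℕ) :
    Nat.nth Nat.Prime (n + 1) ≤ 2 * Nat.nth Nat.Prime n := by
  obtain ⟨p, hp, h1, h2⟩ := Nat.exists_prime_lt_and_le_two_mul (Nat.nth Nat.Prime n)
    (Nat.prime_nth_prime n).ne_zero
  refine le_trans ?_ h2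
  rw [← Nat.nth_count hp] at h1 ⊢
  have := (Nat.nth_lt_nth Nat.infinite_setOfPred_prime).mp h1
  exact (Nat.nth_le_nth Nat.infinite_setOfPred_prime).mpr this

theorem rpow_gap (x a b : ℝ) (hx : 0 < x) (ha : 0 < a) (hb : 0 < b) :
    b ^ (-x) * (x * ((b - a) / b)) ≤ a ^ (-x) - b ^ (-x) := by
  have h1 : a ^ (-x) = b ^ (-x) * Real.exp (x * Real.log (b / a)) := by
    rw [Real.rpow_def_of_pos ha, Real.rpow_def_of_pos hb, ← Real.exp_add,
      Real.log_div hb.ne' ha.ne']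
    congr 1; ring
  have h2 := Real.add_one_le_exp (x * Real.log (b / a))
  have h3 := Real.one_sub_inv_le_log_of_pos (div_pos hb ha)
  have h4 : (b - a) / b = 1 - (b / a)⁻¹ := by field_simp
  have h5 := mul_le_mul_of_nonneg_left h3 hx.le
  have h6 : 0 < b ^ (-x) := Real.rpow_pos_of_pos hb _
  rw [h1, h4]
  nlinarith

theorem key (x c : ℝ) (hx : 0 < x) (hc : 0 < c) (N : ℕ)
    (h : ∀ n ≥ N, c * (Nat.nth Nat.Prime n : ℝ) ^ x ≤
      (Nat.nth Nat.Prime (n + 1) : ℝ) - Nat.nth Nat.Prime n) : False := by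
  apply not_summable_nth_prime
  rw [← summable_nat_add_iff (N + 1)]
  set q : ℕ → ℝ := fun n => (Nat.nth Nat.Prime n : ℝ) with hq
  have qpos : ∀ n, 0 < q n := fun n => by
    have := (Nat.prime_nth_prime n).pos
    simp only [hq]; exact_mod_cast this
  have qle : ∀ n, q (n + 1) ≤ 2 * q n := fun n => by
    simp only [hq]; exact_mod_cast nth_prime_succ_le n
  set K : ℝ := x * c * 2 ^ (-x) with hK
  have hKpos : 0 < K := by positivity
  have step : ∀ n ≥ N, K * (1 / q (n + 1)) ≤ q n ^ (-x) - q (n + 1) ^ (-x) := by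
    intro n hn
    refine le_trans ?_ (rpow_gap x (q n) (q (n + 1)) hx (qpos n) (qpos _))
    have h1 : c * q n ^ x ≤ q (n + 1) - q n := h n hn
    have hb := qpos (n + 1)
    have ha := qpos n
    have h2 : (2 : ℝ) ^ (-x) ≤ q (n + 1) ^ (-x) * q n ^ x := by
      have : (2 * q n) ^ (-x) ≤ q (n + 1) ^ (-x) :=
        Real.rpow_le_rpow_of_nonpos hb (qle n) (by linarith)
      rw [Real.mul_rpow (by norm_num) ha.le] at this
      have h3 := mul_le_mul_of_nonneg_right this (Real.rpow_pos_of_pos ha x).le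
      rwa [mul_assoc, ← Real.rpow_add ha, neg_add_cancel, Real.rpow_zero, mul_one] at h3
    have h6 : 0 < q (n + 1) ^ (-x) := Real.rpow_pos_of_pos hb _
    calc K * (1 / q (n + 1)) = x * c * (1 / q (n + 1)) * 2 ^ (-x) := by rw [hK]; ring
      _ ≤ x * c * (1 / q (n + 1)) * (q (n + 1) ^ (-x) * q n ^ x) := by gcongr
      _ = q (n + 1) ^ (-x) * (x * ((c * q n ^ x) / q (n + 1))) := by ring
      _ ≤ _ := by gcongr
  refine summable_of_sum_range_le (c := q N ^ (-x) / K) ?_ ?_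
  · intro n; positivity
  · intro m
    have : K * ∑ i ∈ Finset.range m, 1 / q (i + (N + 1)) ≤ q N ^ (-x) - q (m + N) ^ (-x) := by
      induction m with
      | zero => simp
      | succ m ih =>
        rw [Finset.sum_range_succ, mul_add]
        have := step (m + N) (by omega)
        have e1 : m + (N + 1) = m + N + 1 := by ring
        have e2 : m + 1 + N = m + N + 1 := by ring
        rw [e1, e2]
        linarith
    rw [le_div_iff₀ hKpos, mul_comm]
    have h7 := Real.rpow_pos_of_pos (qpos (m + N)) (-x)
    change K * ∑ i ∈ Finset.range m, 1 / q (i + (N + 1)) ≤ _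
    linarith

/-- For every real `x > 0`, `liminf (p (n+1) - p n) / p n ^ x = 0`. -/
theorem liminf_prime_gap_div_pow (x : ℝ) (hx : 0 < x) :
    Filter.liminf
      (fun n => ((nthPrime (n + 1) : ℝ) - (nthPrime n : ℝ)) / (nthPrime n : ℝ) ^ x)
      Filter.atTop = 0 := by
  rw [Filter.liminf_eq]
  refine IsGreatest.csSup_eq ⟨?_, ?_⟩
  · refine Filter.Eventually.of_forall fun n => ?_
    have : nthPrime n ≤ nthPrime (n + 1) :=
      (Nat.nth_le_nth Nat.infinite_setOfPred_prime).mpr (by omega)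
    have h : (nthPrime n : ℝ) ≤ nthPrime (n + 1) := by exact_mod_cast this
    exact div_nonneg (by linarith) (by positivity)
  · intro c hc
    by_contra! hpos
    obtain ⟨N, hN⟩ := Filter.eventually_atTop.mp hc
    refine key x c hx hpos N fun n hn => ?_
    have h := hN (n + 1) (by omega)
    have hp : (0 : ℝ) < Nat.nth Nat.Prime n := by
      exact_mod_cast (Nat.prime_nth_prime n).pos
    simp only [nthPrime, Nat.add_sub_cancel] at h
    rwa [le_div_iff₀ (Real.rpow_pos_of_pos hp x)] at h
end

section
/- For every real number x > 0, the limit inferior as n → ∞ of (p_{n+1} - p_n) / (log p_n)^{1+x} equals 0, where p_n denotes the n-th prime number and log is the natural logarithm. -/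
theorem nthPrime_prime (n : ℕ) : (nthPrime n).Prime := Nat.prime_nth_prime _

theorem nthPrime_mono : Monotone nthPrime := by
  intro a b h
  exact (Nat.nth_strictMono Nat.infinite_setOfPred_prime).monotone (Nat.sub_le_sub_right h 1)

theorem le_nthPrime (n : ℕ) : n ≤ nthPrime n := by
  have := Nat.add_two_le_nth_prime (n - 1)
  unfold nthPrime
  omega

theorem primeCounting_nthPrime (m : ℕ) (hm : 1 ≤ m) : Nat.primeCounting (nthPrime m) = m := by
  have := Nat.count_nth_succ_of_infinite Nat.infinite_setOfPred_prime (m - 1)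
  unfold nthPrime Nat.primeCounting Nat.primeCounting'
  rw [this]
  omega

theorem nthPrime_le (m : ℕ) (hm : 1 ≤ m) :
    (nthPrime m : ℝ) ≤ 6 * m * Real.log (nthPrime m) := by
  have h2 : (2 : ℝ) ≤ nthPrime m := by exact_mod_cast (nthPrime_prime m).two_le
  have h := (Chebyshev.psi_ge (nthPrime m)).trans
    (Chebyshev.psi_le_primeCounting_mul_log (nthPrime m))
  rw [primeCounting_nthPrime m hm] at h
  have hm' : (1 : ℝ) ≤ m := by exact_mod_cast hm
  generalize (nthPrime m : ℝ) = P at *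
  have h3 : Real.log (P + 1) ≤ 2 * Real.log P := by
    have : 2 * Real.log P = Real.log (P ^ 2) := by rw [Real.log_pow]; norm_num
    rw [this]
    exact Real.log_le_log (by linarith) (by nlinarith)
  have h4 := Real.log_two_gt_d9
  have h5 : 0 ≤ Real.log P := Real.log_nonneg (by linarith)
  have h6 : P * (1 / 2) ≤ P * Real.log 2 := by gcongr; linarith
  have h7 : 1 * Real.log P ≤ m * Real.log P := by gcongr
  linarith

theorem log_nthPrime_two_mul (n : ℕ) (hn : 576 ≤ n) :
    Real.log (nthPrime (2 * n)) ≤ 3 * Real.log (nthPrime n) := by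
  have h := nthPrime_le (2 * n) (by omega)
  have h2 : (2 : ℝ) ≤ nthPrime (2 * n) := by exact_mod_cast (nthPrime_prime _).two_le
  have hn' : (576 : ℝ) ≤ n := by exact_mod_cast hn
  have hl : (n : ℝ) ≤ nthPrime n := by exact_mod_cast le_nthPrime n
  push_cast at h
  generalize (nthPrime (2 * n) : ℝ) = P at *
  have hs : Real.log P ≤ 2 * √P := by
    have := Real.log_le_rpow_div (x := P) (ε := 1 / 2) (by linarith) (by norm_num)
    rw [← Real.sqrt_eq_rpow] at this
    linarith
  have hsq : √P * √P = P := Real.mul_self_sqrt (by linarith)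
  have hsp : 0 < √P := Real.sqrt_pos.2 (by linarith)
  have h3 : √P * √P ≤ (24 * n) * √P := by
    have : 6 * (2 * (n : ℝ)) * Real.log P ≤ 6 * (2 * n) * (2 * √P) := by gcongr
    linarith
  have h4 : √P ≤ 24 * n := le_of_mul_le_mul_right h3 hsp
  have h5 : P ≤ (n : ℝ) ^ 3 := by
    have : √P * √P ≤ (24 * n) * (24 * n) := by gcongr
    have : 576 * ((n : ℝ) * n) ≤ n * (n * n) := by gcongr
    nlinarith
  calc Real.log P ≤ Real.log ((n : ℝ) ^ 3) := Real.log_le_log (by linarith) h5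
    _ = 3 * Real.log n := by rw [Real.log_pow]; norm_num
    _ ≤ _ := by gcongr

theorem frequently_gap_le (x : ℝ) (hx : 0 < x) (ε : ℝ) (hε : 0 < ε) :
    ∃ᶠ n in Filter.atTop, ((nthPrime (n + 1) : ℝ) - (nthPrime n : ℝ))
        / (Real.log (nthPrime n)) ^ (1 + x) ≤ ε := by
  intro hcon
  obtain ⟨N, hN⟩ := Filter.eventually_atTop.1 hcon
  have ht : Filter.Tendsto (fun n : ℕ => ε * (Real.log (nthPrime n)) ^ x)
      Filter.atTop Filter.atTop := by
    apply Filter.Tendsto.const_mul_atTop hε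
    apply (tendsto_rpow_atTop hx).comp
    apply Real.tendsto_log_atTop.comp
    apply tendsto_natCast_atTop_atTop.comp
    exact Filter.tendsto_atTop_mono le_nthPrime Filter.tendsto_id
  obtain ⟨n, hn1, hn2⟩ := ((ht.eventually_gt_atTop 36).and
    (Filter.eventually_ge_atTop (N + 576))).exists
  have hlp : ∀ k, 0 < Real.log (nthPrime k) := fun k =>
    Real.log_pos (by exact_mod_cast (nthPrime_prime k).one_lt)
  have hstep : ∀ j : ℕ, (nthPrime n : ℝ) + j * (ε * Real.log (nthPrime n) ^ (1 + x))
      ≤ nthPrime (n + j) := by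
    intro j
    induction j with
    | zero => simp
    | succ j ih =>
      have h1 := hN (n + j) (by omega)
      rw [not_le, lt_div_iff₀ (Real.rpow_pos_of_pos (hlp _) _)] at h1
      have h2 : ε * Real.log (nthPrime n) ^ (1 + x)
          ≤ ε * Real.log (nthPrime (n + j)) ^ (1 + x) := by
        have hp : (0 : ℝ) < nthPrime n := by exact_mod_cast (nthPrime_prime n).pos
        have hle : (nthPrime n : ℝ) ≤ nthPrime (n + j) := by
          exact_mod_cast nthPrime_mono (Nat.le_add_right n j)
        have := (hlp n).le
        gcongr
      push_cast
      rw [← add_assoc]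
      linarith
  have h1 := hstep n
  have h2 := nthPrime_le (2 * n) (by omega)
  have h3 := log_nthPrime_two_mul n (by omega)
  rw [← two_mul] at h1
  rw [Real.rpow_add (hlp n), Real.rpow_one] at h1
  push_cast at h2
  have hp : (0 : ℝ) ≤ nthPrime n := by positivity
  have hn0 : (0 : ℝ) < n := by
    have : 0 < n := by omega
    exact_mod_cast this
  have h4 : 6 * (2 * (n : ℝ)) * Real.log (nthPrime (2 * n))
      ≤ 6 * (2 * n) * (3 * Real.log (nthPrime n)) := by gcongr
  have h5 : (n * Real.log (nthPrime n)) * 36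
      < (n * Real.log (nthPrime n)) * (ε * Real.log (nthPrime n) ^ x) :=
    mul_lt_mul_of_pos_left hn1 (mul_pos hn0 (hlp n))
  linarith

/-- For every real `x > 0`, `liminf (p (n+1) - p n) / (log (p n)) ^ (1 + x) = 0`. -/
theorem liminf_prime_gap_div_log_pow (x : ℝ) (hx : 0 < x) :
    Filter.liminf
      (fun n => ((nthPrime (n + 1) : ℝ) - (nthPrime n : ℝ))
        / (Real.log (nthPrime n)) ^ (1 + x))
      Filter.atTop = 0 := by
  have hnn : ∀ n, 0 ≤ ((nthPrime (n + 1) : ℝ) - (nthPrime n : ℝ))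
        / (Real.log (nthPrime n)) ^ (1 + x) := by
    intro n
    have h1 : (nthPrime n : ℝ) ≤ nthPrime (n + 1) := by
      exact_mod_cast nthPrime_mono (Nat.le_succ n)
    have h2 : 0 ≤ Real.log (nthPrime n) := Real.log_natCast_nonneg _
    exact div_nonneg (by linarith) (Real.rpow_nonneg h2 _)
  apply le_antisymm
  · apply le_of_forall_pos_le_add
    intro ε hε
    rw [zero_add]
    exact Filter.liminf_le_of_frequently_le (frequently_gap_le x hx ε hε)
      (Filter.isBoundedUnder_of ⟨0, hnn⟩)
  · apply Filter.le_liminf_of_le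
    · exact Filter.IsCoboundedUnder.of_frequently_le (a := 1) (frequently_gap_le x hx 1 one_pos)
    · exact Filter.Eventually.of_forall hnn
end

section
/- For every real number x with 0 ≤ x < 1, the inequality p_{n+1}^x - p_n^x < 1/(p_{n+1} * p_n)^{1-x} + (p_{n+1} - p_n) / p_n^{1-x} holds for infinitely many values of n, where p_n denotes the n-th prime number. -/
theorem pow_gap_aux (x a b : ℝ) (hx1 : x < 1) (ha : 0 < a) (hab : a ≤ b) :
    b ^ x - a ^ x < 1 / (b * a) ^ (1 - x) + (b - a) / a ^ (1 - x) := by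
  have hb : 0 < b := lt_of_lt_of_le ha hab
  have h1 : 0 < 1 / (b * a) ^ (1 - x) := by positivity
  have key : ∀ c : ℝ, 0 < c → c ^ x = c / c ^ (1 - x) := by
    intro c hc
    conv_lhs => rw [show x = 1 - (1 - x) by ring]
    rw [Real.rpow_sub hc, Real.rpow_one]
  have h2 : a ^ (1 - x) ≤ b ^ (1 - x) := Real.rpow_le_rpow ha.le hab (by linarith)
  have h3 : b / b ^ (1 - x) ≤ b / a ^ (1 - x) :=
    div_le_div_of_nonneg_left hb.le (by positivity) h2
  rw [key a ha, key b hb, sub_div]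
  linarith

/-- For every real `x` with `0 ≤ x < 1`, the inequality
`p (n+1) ^ x - p n ^ x < 1 / (p (n+1) * p n) ^ (1 - x) + (p (n+1) - p n) / p n ^ (1 - x)`
holds for infinitely many positive integers `n`. -/
theorem prime_power_gap_bound (x : ℝ) (hx0 : 0 ≤ x) (hx1 : x < 1) :
    ∃ᶠ n in Filter.atTop, 1 ≤ n ∧
      (nthPrime (n + 1) : ℝ) ^ x - (nthPrime n : ℝ) ^ x
        < 1 / ((nthPrime (n + 1) : ℝ) * (nthPrime n : ℝ)) ^ (1 - x)
          + ((nthPrime (n + 1) : ℝ) - (nthPrime n : ℝ)) / (nthPrime n : ℝ) ^ (1 - x) := by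
  apply Filter.Eventually.frequently
  filter_upwards [Filter.eventually_ge_atTop 1] with n hn
  refine ⟨hn, pow_gap_aux x _ _ hx1 ?_ ?_⟩
  · exact_mod_cast (Nat.prime_nth_prime (n - 1)).pos
  · exact_mod_cast (Nat.nth_strictMono Nat.infinite_setOfPred_prime).monotone
      (show n - 1 ≤ n + 1 - 1 by omega)
end
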